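/- Let κ ≥ 2 and p ≥ 1 be integers and let G be a graph whose vertex set is partitioned into classes V_1,…,V_κ with V_i = {v_i^1,…,v_i^p}, such that no edge joins two vertices of the same class; let M = |E(G)|. Then G has a multicolored clique — a set of κ pairwise adjacent vertices containing exactly one vertex from each class — if and only if some decision tree obtained from the tree T of the multicolored-clique construction by subtree raising operations has exactly 2κ inner nodes and at most M − κ(κ−1)/2 errors on the constructed training set. -/

import Mathlib

/-- The two class labels. -/
inductive Label where
  | blue
  | red
deriving DecidableEq

/-- A decision tree over examples `ι → ℝ` with classes `{blue, red}`:
every inner node carries a feature and a threshold, every leaf a class label.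
An example goes to the left child if its value in the node's feature is at most
the threshold, and to the right child otherwise. -/
inductive DTree (ι : Type) where
  | leaf (c : Label)
  | node (feat : ι) (thr : ℝ) (left right : DTree ι)

namespace DTree

variable {ι : Type}

/-- The class that a decision tree assigns to an example. -/
noncomputable def classify : DTree ι → (ι → ℝ) → Label
  | .leaf c, _ => c
  | .node f t l r, e => if e f ≤ t then l.classify e else r.classify e

/-- The routing path of an example (`false` = left child, `true` = right child);
it is the position of the leaf of the example. -/
noncomputable def route : DTree ι → (ι → ℝ) → List Bool
  | .leaf _, _ => []
  | .node f t l r, e => if e f ≤ t then false :: l.route e else true :: r.route e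

/-- The subtree rooted at a position (`none` if the position is not a node). -/
def subtreeAt : DTree ι → List Bool → Option (DTree ι)
  | T, [] => some T
  | .leaf _, _ :: _ => none
  | .node _ _ l r, b :: p => (if b then r else l).subtreeAt p

/-- Replace the subtree at a given position by another tree. -/
def replaceAt : DTree ι → List Bool → DTree ι → DTree ι
  | _, [], T' => T'
  | .leaf c, _ :: _, _ => .leaf c
  | .node f t l r, b :: p, T' =>
      if b then .node f t l (r.replaceAt p T') else .node f t (l.replaceAt p T') r

/-- The number of inner nodes of a decision tree. -/
def innerCount : DTree ι → ℕ
  | .leaf _ => 0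
  | .node _ _ l r => 1 + l.innerCount + r.innerCount

/-- The position `p` is an inner node of `T`. -/
def IsInnerPos (T : DTree ι) (p : List Bool) : Prop :=
  ∃ f t l r, T.subtreeAt p = some (.node f t l r)

/-- The position `p` is a node of `T`. -/
def IsNodePos (T : DTree ι) (p : List Bool) : Prop :=
  (T.subtreeAt p).isSome

/-- The feature and threshold of the inner node at position `p`. -/
def cutAt (T : DTree ι) (p : List Bool) : Option (ι × ℝ) :=
  match T.subtreeAt p with
  | some (.node f t _ _) => some (f, t)
  | _ => none

/-- The subtree raising operation at position `q` keeping the child in direction `b`: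
the subtree rooted at `q` is replaced by the subtree rooted at its `b`-child; it prunes
the node at `q` together with all inner nodes of the subtree rooted at the other child. -/
def raiseAt (T : DTree ι) (q : List Bool) (b : Bool) : DTree ι :=
  match T.subtreeAt q with
  | some (.node _ _ l r) => T.replaceAt q (if b then r else l)
  | _ => T

end DTree

/-- `E[T,p]`: the examples of `E` whose routing through `T` passes the position `p`. -/
noncomputable def reach {ι : Type} (E : Finset (ι → ℝ)) (T : DTree ι) (p : List Bool) :
    Finset (ι → ℝ) :=
  E.filter fun e => p <+: T.route e

/-- The number of errors of `T` on the training set `(E, lab)`. -/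
noncomputable def errCount {ι : Type} (T : DTree ι) (E : Finset (ι → ℝ))
    (lab : (ι → ℝ) → Label) : ℕ :=
  (E.filter fun e => T.classify e ≠ lab e).card

/-- A most frequent label of the labeled set `(E, lab)` (blue in case of a tie). -/
def majorityLabel {ι : Type} (E : Finset (ι → ℝ)) (lab : (ι → ℝ) → Label) : Label :=
  if (E.filter fun e => lab e = Label.red).card ≤ (E.filter fun e => lab e = Label.blue).card
  then Label.blue else Label.red

/-- One subtree replacement operation: some inner node of `T` is replaced by a leaf
labeled with a most frequent label of the examples reaching it. -/
def ReplStep {ι : Type} (E : Finset (ι → ℝ)) (lab : (ι → ℝ) → Label)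
    (T T' : DTree ι) : Prop :=
  ∃ p, T.IsInnerPos p ∧
    T' = T.replaceAt p (.leaf (majorityLabel (reach E T p) lab))

/-- `T` is a reasonable decision tree for `(E, lab)`: every node is reached by some
example and every leaf carries a most frequent label of the examples reaching it. -/
def Reasonable {ι : Type} (E : Finset (ι → ℝ)) (lab : (ι → ℝ) → Label)
    (T : DTree ι) : Prop :=
  (∀ p, T.IsNodePos p → (reach E T p).Nonempty) ∧
  (∀ p c, T.subtreeAt p = some (.leaf c) → ∀ c' : Label,
    ((reach E T p).filter fun e => lab e = c').card ≤
      ((reach E T p).filter fun e => lab e = c).card)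

/-- Apply a sequence of raising operations (given by positions and kept directions). -/
def applySeq {ι : Type} : DTree ι → List (List Bool × Bool) → DTree ι
  | T, [] => T
  | T, (q, b) :: rest => applySeq (T.raiseAt q b) rest

/-- Each raising operation of the sequence is applied at an inner node. -/
def ValidSeq {ι : Type} : DTree ι → List (List Bool × Bool) → Prop
  | _, [] => True
  | T, (q, b) :: rest => T.IsInnerPos q ∧ ValidSeq (T.raiseAt q b) rest

/-- The total number of inner nodes pruned by a sequence of raising operations. -/
def seqPruned {ι : Type} : DTree ι → List (List Bool × Bool) → ℕ
  | _, [] => 0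
  | T, (q, b) :: rest =>
      (match T.subtreeAt q with
        | some (.node _ _ l r) => 1 + DTree.innerCount (if b then l else r)
        | _ => 0) + seqPruned (T.raiseAt q b) rest

/-- `T'` is obtained from `T` by a (possibly empty) sequence of subtree raising
operations. -/
def RaisedFrom {ι : Type} (T T' : DTree ι) : Prop :=
  ∃ steps, ValidSeq T steps ∧ applySeq T steps = T'

/-- `T'` is obtained from `T` by a sequence of subtree raising operations pruning
exactly `m` inner nodes in total. -/
def RaisedFromPruning {ι : Type} (T : DTree ι) (m : ℕ) (T' : DTree ι) : Prop :=
  ∃ steps, ValidSeq T steps ∧ seqPruned T steps = m ∧ applySeq T steps = T'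

/-- Tracking the position of a node through one raising operation: nodes strictly
below the raised node on the discarded side, and the raised node itself, are pruned
(`none`); all other nodes survive at a possibly shifted position. -/
def stepMap (q : List Bool) (b : Bool) (p : List Bool) : Option (List Bool) :=
  if q <+: p then
    if q ++ [b] <+: p then some (q ++ p.drop (q.length + 1)) else none
  else some p

/-- Tracking the position of a node through a sequence of raising operations. -/
def seqMap : List (List Bool × Bool) → List Bool → Option (List Bool)
  | [], p => some p
  | (q, b) :: rest, p => (stepMap q b p).bind (seqMap rest)

/-- The number of errors of `T` on a multiset of labeled examples. -/
noncomputable def errCountM {ι : Type} (T : DTree ι) (E : Multiset ((ι → ℝ) × Label)) : ℕ :=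
  (E.filter fun q => T.classify q.1 ≠ q.2).card

/-- The default example of the multicolored-clique construction: value `p` in each
feature `d_i^<` (encoded `(i, false)`) and `0` in each feature `d_i^>`
(encoded `(i, true)`). -/
def dflt (κ p : ℕ) : (Fin κ × Bool) → ℝ := fun x => if x.2 then 0 else p

/-- Set both coordinates `d_i^<` and `d_i^>` of an example to the value `val`. -/
def setBoth {κ : ℕ} (i : Fin κ) (val : ℝ) (e : (Fin κ × Bool) → ℝ) :
    (Fin κ × Bool) → ℝ :=
  fun x => if x.1 = i then val else e x

/-- The red edge example of an edge `{v_i^a, v_j^b}` (vertices of `Fin κ × Fin p`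
with 1-based values): value `a` in `d_i^<` and `d_i^>`, value `b` in `d_j^<`
and `d_j^>`, default elsewhere. -/
def edgeEx13 {κ p : ℕ} (u v : Fin κ × Fin p) : (Fin κ × Bool) → ℝ :=
  setBoth u.1 ((u.2 : ℕ) + 1) (setBoth v.1 ((v.2 : ℕ) + 1) (dflt κ p))

/-- The training set of the multicolored-clique construction with `M = |E(G)|`:
one red edge example per edge; `M` identical blue separation examples with value
`a + 1/2` in `d_i^<, d_i^>` for each `i` and each `1 ≤ a ≤ p − 1`; per class `i`,
`M` identical blue examples with value `0` in `d_i^<` and `M` identical blue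
examples with value `p + 1` in `d_i^>`; and `M` identical all-default red
examples. -/
noncomputable def E13 {κ p : ℕ} (G : SimpleGraph (Fin κ × Fin p))
    [DecidableRel G.Adj] : Multiset (((Fin κ × Bool) → ℝ) × Label) :=
  let M := G.edgeFinset.card
  (((Finset.univ ×ˢ Finset.univ).filter
      fun q : (Fin κ × Fin p) × (Fin κ × Fin p) =>
        G.Adj q.1 q.2 ∧ q.1.1 < q.2.1).val.map
      fun q => (edgeEx13 q.1 q.2, Label.red))
  + ((Finset.univ ×ˢ Finset.Icc 1 (p - 1) : Finset (Fin κ × ℕ)).val.bind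
      fun x => Multiset.replicate M
        (setBoth x.1 ((x.2 : ℝ) + 1/2) (dflt κ p), Label.blue))
  + (Finset.univ.val.bind fun i : Fin κ =>
      Multiset.replicate M (Function.update (dflt κ p) (i, false) 0, Label.blue)
      + Multiset.replicate M
          (Function.update (dflt κ p) (i, true) ((p : ℝ) + 1), Label.blue))
  + Multiset.replicate M (dflt κ p, Label.red)

/-- A path of cuts: each list entry `(f, t, contRight)` realizes a cut at feature
`f` with threshold `t`; if `contRight` is true, the left child is a blue leaf and
the path continues to the right, otherwise the right child is a blue leaf and the
path continues to the left. -/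
def chainC {ι : Type} (cuts : List (ι × ℝ × Bool)) (tail : DTree ι) : DTree ι :=
  cuts.foldr (fun c acc =>
    if c.2.2 then DTree.node c.1 c.2.1 (.leaf .blue) acc
    else DTree.node c.1 c.2.1 acc (.leaf .blue)) tail

/-- The input tree of the multicolored-clique construction: for `i = 1, …, κ`
in order, the cuts `d_i^< < c` for `c = 1, …, p` (realized by thresholds
`c − 1/4`, blue leaf on the `< c` side) followed by the cuts `d_i^> > c` for
`c = p, …, 1` (realized by thresholds `c`, blue leaf on the `> c` side); the
continuing child of the last cut is a red leaf. -/
noncomputable def T13 (κ p : ℕ) : DTree (Fin κ × Bool) :=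
  chainC ((List.ofFn fun i : Fin κ =>
      (((List.range p).map fun c =>
          ((i, false), ((c : ℝ) + 1) - 1/4, true))
        ++ ((List.range p).reverse.map fun c =>
          ((i, true), ((c : ℝ) + 1), false))))).flatten
    (.leaf .red)

/-!
Raising operations turn a path of cuts into a subpath of it, ending in a red leaf or in one of the
blue ones. A tree with fewer than `M` errors classifies every example that occurs `M` times
correctly: the red default example makes the last leaf red, and the border examples with value `0`
or `p + 1` force a cut in each of the `2κ` features. With only `2κ` cuts there is then exactly one
lower and one upper cut per class, so the examples that reach the red leaf form a box, and the blue
separation examples force the upper cut of each class not to exceed its lower cut. Hence at most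
one vertex per class passes both cuts; the edges whose examples are classified correctly join
selected vertices, and there are `κ(κ−1)/2` of them only if the selected vertices are pairwise
adjacent. Conversely, cutting on both sides of each vertex of a multicolored clique misclassifies
only the edges outside the clique.
-/

section Raising

open Relation

variable {ι : Type} {f : ι} {t : ℝ} {l r T T' : DTree ι} {c : Label}

/-- A single subtree raising operation turns `T` into `T'`. -/
def RaiseStep (T T' : DTree ι) : Prop :=
  ∃ q b, T.IsInnerPos q ∧ T.raiseAt q b = T'

theorem raisedFrom_iff_reflTransGen : RaisedFrom T T' ↔ ReflTransGen RaiseStep T T' := by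
  constructor
  · rintro ⟨steps, hvalid, rfl⟩
    induction steps generalizing T with
    | nil => exact .refl
    | cons s steps ih => exact .head ⟨s.1, s.2, hvalid.1, rfl⟩ (ih hvalid.2)
  · intro h
    induction h using ReflTransGen.head_induction_on with
    | refl => exact ⟨[], trivial, rfl⟩
    | head hstep _ ih =>
      obtain ⟨q, b, hq, rfl⟩ := hstep
      obtain ⟨steps, hvalid, hT'⟩ := ih
      exact ⟨(q, b) :: steps, ⟨hq, hvalid⟩, hT'⟩

theorem DTree.raiseAt_node_cons (d : Bool) (q : List Bool) (b : Bool) :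
    (DTree.node f t l r).raiseAt (d :: q) b =
      if d then .node f t l (r.raiseAt q b) else .node f t (l.raiseAt q b) r := by
  cases d <;> simp only [raiseAt, subtreeAt, replaceAt, if_true, Bool.false_eq_true, if_false] <;>
    split <;> rfl

theorem not_raiseStep_leaf : ¬ RaiseStep (.leaf c) T := by
  rintro ⟨_ | _, b, ⟨f, t, l, r, h⟩, -⟩ <;> simp [DTree.subtreeAt] at h

theorem raiseStep_node_iff :
    RaiseStep (.node f t l r) T' ↔
      (T' = l ∨ ∃ l', RaiseStep l l' ∧ T' = .node f t l' r) ∨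
      (T' = r ∨ ∃ r', RaiseStep r r' ∧ T' = .node f t l r') := by
  constructor
  · rintro ⟨_ | ⟨_ | _, q⟩, b, hq, rfl⟩
    · cases b
      · exact .inl (.inl rfl)
      · exact .inr (.inl rfl)
    · exact .inl (.inr ⟨_, ⟨q, b, hq, rfl⟩, DTree.raiseAt_node_cons _ q b⟩)
    · exact .inr (.inr ⟨_, ⟨q, b, hq, rfl⟩, DTree.raiseAt_node_cons _ q b⟩)
  · rintro ((rfl | ⟨_, ⟨q, b, hq, rfl⟩, rfl⟩) | (rfl | ⟨_, ⟨q, b, hq, rfl⟩, rfl⟩))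
    · exact ⟨[], false, ⟨_, _, _, _, rfl⟩, rfl⟩
    · exact ⟨false :: q, b, hq, DTree.raiseAt_node_cons _ q b⟩
    · exact ⟨[], true, ⟨_, _, _, _, rfl⟩, rfl⟩
    · exact ⟨true :: q, b, hq, DTree.raiseAt_node_cons _ q b⟩

end Raising

section CutPaths

open Relation

variable {ι : Type} {L L' : List (ι × ℝ × Bool)} {c : Label}

theorem chainC_cons (x : ι × ℝ × Bool) (L : List (ι × ℝ × Bool)) (T : DTree ι) :
    chainC (x :: L) T = if x.2.2 then .node x.1 x.2.1 (.leaf .blue) (chainC L T)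
      else .node x.1 x.2.1 (chainC L T) (.leaf .blue) := rfl

theorem raiseStep_chainC_cons_iff {x : ι × ℝ × Bool} {T T' : DTree ι} :
    RaiseStep (chainC (x :: L) T) T' ↔
      T' = .leaf .blue ∨ T' = chainC L T ∨
        ∃ S, RaiseStep (chainC L T) S ∧ T' = chainC [x] S := by
  simp only [chainC_cons x]
  split_ifs
  · simp only [raiseStep_node_iff, not_raiseStep_leaf, false_and, exists_false, or_false]
    rfl
  · simp only [raiseStep_node_iff, not_raiseStep_leaf, false_and, exists_false, or_false]
    exact or_comm

theorem raisedFrom_chainC_of_sublist (h : L'.Sublist L) (T : DTree ι) :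
    RaisedFrom (chainC L T) (chainC L' T) := by
  rw [raisedFrom_iff_reflTransGen]
  induction h with
  | slnil => exact .refl
  | cons x _ ih => exact ih.head (raiseStep_chainC_cons_iff.2 (.inr (.inl rfl)))
  | cons_cons x _ ih =>
    exact ih.lift (fun S => chainC [x] S) fun S S' h =>
      raiseStep_chainC_cons_iff.2 (.inr (.inr ⟨S', h, rfl⟩))

theorem RaiseStep.exists_eq_chainC {T' : DTree ι} (h : RaiseStep (chainC L (.leaf c)) T') :
    ∃ L' c', L'.Sublist L ∧ T' = chainC L' (.leaf c') := by
  induction L generalizing T' with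
  | nil => exact absurd h not_raiseStep_leaf
  | cons x L ih =>
    obtain rfl | rfl | ⟨S, hS, rfl⟩ := raiseStep_chainC_cons_iff.1 h
    · exact ⟨[], .blue, List.nil_sublist _, rfl⟩
    · exact ⟨L, c, List.sublist_cons_self _ _, rfl⟩
    · obtain ⟨L', c', hL', rfl⟩ := ih hS
      exact ⟨x :: L', c', hL'.cons_cons x, rfl⟩

theorem RaisedFrom.exists_eq_chainC {T' : DTree ι} (h : RaisedFrom (chainC L (.leaf c)) T') :
    ∃ L' c', L'.Sublist L ∧ T' = chainC L' (.leaf c') := by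
  rw [raisedFrom_iff_reflTransGen] at h
  induction h with
  | refl => exact ⟨L, c, .refl L, rfl⟩
  | tail _ hstep ih =>
    obtain ⟨L₁, c₁, hL₁, rfl⟩ := ih
    obtain ⟨L₂, c₂, hL₂, rfl⟩ := hstep.exists_eq_chainC
    exact ⟨L₂, c₂, hL₂.trans hL₁, rfl⟩

theorem innerCount_chainC (L : List (ι × ℝ × Bool)) (c : Label) :
    (chainC L (.leaf c)).innerCount = L.length := by
  induction L with
  | nil => rfl
  | cons x L ih =>
    rw [chainC_cons, List.length_cons, ← ih]
    split_ifs <;> simp only [DTree.innerCount] <;> omega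

/-- The example `e` continues along the path at the cut `x`, instead of ending in the blue leaf
that `chainC` attaches there. -/
def Passes (x : ι × ℝ × Bool) (e : ι → ℝ) : Prop :=
  if x.2.2 then x.2.1 < e x.1 else e x.1 ≤ x.2.1

theorem passes_congr {x : ι × ℝ × Bool} {e e' : ι → ℝ} (h : e x.1 = e' x.1) :
    Passes x e ↔ Passes x e' := by
  rw [Passes, Passes, h]

theorem classify_chainC_eq_red_iff {e : ι → ℝ} :
    (chainC L (.leaf c)).classify e = .red ↔ c = .red ∧ ∀ x ∈ L, Passes x e := by
  induction L with
  | nil => simp [chainC, DTree.classify]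
  | cons x L ih =>
    rw [chainC_cons, List.forall_mem_cons, Passes, and_left_comm, ← ih]
    split_ifs <;> simp only [DTree.classify] <;> split_ifs with h <;> simp [h, lt_iff_not_ge]

end CutPaths

section ErrorCounts

variable {ι : Type} (T : DTree ι) (A B : Multiset ((ι → ℝ) × Label))

theorem errCountM_add : errCountM T (A + B) = errCountM T A + errCountM T B := by
  simp [errCountM]

theorem errCountM_nsmul (n : ℕ) : errCountM T (n • A) = n * errCountM T A := by
  rw [errCountM, Multiset.filter_nsmul, Multiset.card_nsmul, errCountM]

variable {T A} in
theorem errCountM_eq_zero_iff : errCountM T A = 0 ↔ ∀ q ∈ A, T.classify q.1 = q.2 := by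
  simp [errCountM, Multiset.filter_eq_nil]

end ErrorCounts

section Selections

open Finset

/-- The edges of `G` as ordered pairs, oriented from smaller to larger class, where `π v` is the
class of the vertex `v`. -/
def orientedEdges {V I : Type*} [Fintype V] [LinearOrder I] (G : SimpleGraph V)
    [DecidableRel G.Adj] (π : V → I) : Finset (V × V) :=
  univ.filter fun q => G.Adj q.1 q.2 ∧ π q.1 < π q.2

theorem mem_orientedEdges {V I : Type*} [Fintype V] [LinearOrder I] {G : SimpleGraph V}
    [DecidableRel G.Adj] {π : V → I} {q : V × V} :
    q ∈ orientedEdges G π ↔ G.Adj q.1 q.2 ∧ π q.1 < π q.2 := by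
  simp [orientedEdges]

theorem card_orientedEdges {V I : Type*} [Fintype V] [LinearOrder I] (G : SimpleGraph V)
    [DecidableRel G.Adj] [Fintype G.edgeSet] {π : V → I} (hπ : ∀ u v, G.Adj u v → π u ≠ π v) :
    #(orientedEdges G π) = #G.edgeFinset := by
  refine card_bij (fun q _ => s(q.1, q.2)) (fun q hq => ?_) ?_ fun s hs => ?_
  · simpa using (mem_orientedEdges.1 hq).1
  · rintro ⟨u, v⟩ h ⟨u', v'⟩ h' heq
    obtain ⟨rfl, rfl⟩ | ⟨rfl, rfl⟩ := Sym2.eq_iff.1 heq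
    · rfl
    · exact absurd (mem_orientedEdges.1 h).2 (mem_orientedEdges.1 h').2.not_gt
  · induction s using Sym2.ind with
    | _ u v =>
      have huv : G.Adj u v := by simpa using hs
      obtain hlt | hlt := (hπ u v huv).lt_or_gt
      · exact ⟨(u, v), mem_orientedEdges.2 ⟨huv, hlt⟩, rfl⟩
      · exact ⟨(v, u), mem_orientedEdges.2 ⟨huv.symm, hlt⟩, Sym2.eq_swap⟩

/-- The subgraph of `G` induced by a selection `f` of one vertex per class, as a graph on the
classes. Multicolored cliques are the selections for which it is complete. -/
abbrev selectionGraph {I A : Type*} (G : SimpleGraph (I × A)) (f : I → A) : SimpleGraph I :=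
  G.comap fun i => (i, f i)

variable {I A : Type*} [Fintype I]

theorem forall_adj_iff_choose_two_le_card_edgeFinset {G : SimpleGraph (I × A)}
    {f : I → A} [Fintype (selectionGraph G f).edgeSet] :
    (∀ i j, i ≠ j → G.Adj (i, f i) (j, f j)) ↔
      (Fintype.card I).choose 2 ≤ #(selectionGraph G f).edgeFinset := by
  classical
  rw [← SimpleGraph.card_edgeFinset_top_eq_card_choose_two]
  constructor
  · intro h
    exact card_le_card (SimpleGraph.edgeFinset_mono fun i j hij => h i j hij)
  · intro h i j hij
    have htop : selectionGraph G f = ⊤ := SimpleGraph.edgeFinset_inj.1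
      (eq_of_subset_of_card_le (SimpleGraph.edgeFinset_mono le_top) h)
    have hadj : (selectionGraph G f).Adj i j := htop ▸ hij
    exact hadj

theorem card_orientedEdges_filter_selected [LinearOrder I] [Fintype A] [DecidableEq A]
    (G : SimpleGraph (I × A)) [DecidableRel G.Adj] (f : I → A) :
    #{q ∈ orientedEdges G Prod.fst | q.1.2 = f q.1.1 ∧ q.2.2 = f q.2.1} =
      #(selectionGraph G f).edgeFinset := by
  rw [← card_orientedEdges (selectionGraph G f) (π := id) fun i j h => h.ne]
  refine card_nbij' (fun q => (q.1.1, q.2.1)) (fun x => ((x.1, f x.1), (x.2, f x.2)))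
    ?_ ?_ ?_ ?_
  · rintro ⟨⟨i, a⟩, ⟨j, b⟩⟩ hq
    obtain ⟨hq, ha : a = f i, hb : b = f j⟩ := mem_filter.1 hq
    subst ha hb
    exact mem_orientedEdges.2 (mem_orientedEdges (π := Prod.fst).1 hq)
  · intro x hx
    exact mem_filter.2 ⟨mem_orientedEdges.2 (mem_orientedEdges (π := id).1 hx), rfl, rfl⟩
  · rintro ⟨⟨i, a⟩, ⟨j, b⟩⟩ hq
    obtain ⟨-, ha : a = f i, hb : b = f j⟩ := mem_filter.1 hq
    exact congrArg₂ Prod.mk (congrArg (Prod.mk i) ha.symm) (congrArg (Prod.mk j) hb.symm)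
  · exact fun _ _ => rfl

end Selections


section NatCast

variable {m n : ℕ} {δ : ℝ}

theorem natCast_lt_add_iff (hδ₀ : 0 < δ) (hδ₁ : δ ≤ 1) : (m : ℝ) < n + δ ↔ m ≤ n := by
  refine ⟨fun h => ?_, fun h => ?_⟩
  · have hlt : (m : ℝ) < n + 1 := by linarith
    exact Nat.lt_succ_iff.1 (by exact_mod_cast hlt)
  · exact lt_add_of_le_of_pos (Nat.cast_le.2 h) hδ₀

theorem natCast_le_add_iff (hδ₀ : 0 ≤ δ) (hδ₁ : δ < 1) : (m : ℝ) ≤ n + δ ↔ m ≤ n := by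
  refine ⟨fun h => ?_, fun h => ?_⟩
  · have hlt : (m : ℝ) < n + 1 := by linarith
    exact Nat.lt_succ_iff.1 (by exact_mod_cast hlt)
  · exact le_add_of_le_of_nonneg (Nat.cast_le.2 h) hδ₀

end NatCast

section Boxes

variable {κ p : ℕ} {L : List ((Fin κ × Bool) × ℝ × Bool)} {g : Fin κ × Bool → Fin p}
  {e : Fin κ × Bool → ℝ}

/-- The cut of `T13` in the feature `y` at the value `c + 1`, that is `d_i^< < c + 1` for
`y = (i, false)` and `d_i^> > c + 1` for `y = (i, true)`. Cuts are indexed from `c = 0`, so that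
the values of `Fin p` index exactly the cuts of one feature. -/
noncomputable def cut (y : Fin κ × Bool) (c : ℕ) : (Fin κ × Bool) × ℝ × Bool :=
  (y, if y.2 then (c : ℝ) + 1 else (c : ℝ) + 1 - 1 / 4, !y.2)

/-- The cuts along the path `T13 κ p`, from the root downwards. -/
noncomputable def allCuts (κ p : ℕ) : List ((Fin κ × Bool) × ℝ × Bool) :=
  (List.finRange κ).flatMap fun i =>
    (List.range p).map (cut (i, false)) ++ (List.range p).reverse.map (cut (i, true))

theorem T13_eq_chainC (κ p : ℕ) : T13 κ p = chainC (allCuts κ p) (.leaf .red) := by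
  -- The variable `c` of `T13` is real: the lists of naturals are coerced through the list monad.
  have hcast (l : List ℕ) : (do let a ← l; pure (a : ℝ)) = l.map (fun a : ℕ => (a : ℝ)) :=
    bind_pure_comp _ l
  simp only [T13, allCuts, hcast, List.map_map, List.ofFn_eq_map, ← List.flatMap_def]
  rfl

theorem mem_allCuts {x : (Fin κ × Bool) × ℝ × Bool} :
    x ∈ allCuts κ p ↔ ∃ (y : Fin κ × Bool) (c : Fin p), x = cut y c := by
  simp [allCuts, Prod.exists, Fin.exists_iff, exists_or, eq_comm]

theorem passes_cut_false {i : Fin κ} {c : ℕ} :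
    Passes (cut (i, false) c) e ↔ (c : ℝ) + 1 - 1 / 4 < e (i, false) := by
  simp [Passes, cut]

theorem passes_cut_true {i : Fin κ} {c : ℕ} :
    Passes (cut (i, true) c) e ↔ e (i, true) ≤ (c : ℝ) + 1 := by
  simp [Passes, cut]

theorem passes_cut_dflt (y : Fin κ × Bool) (c : Fin p) : Passes (cut y c) (dflt κ p) := by
  obtain ⟨i, _ | _⟩ := y
  · have hc : ((c : ℕ) : ℝ) + 1 ≤ p := by exact_mod_cast c.2
    rw [passes_cut_false, dflt, if_neg Bool.false_ne_true]
    linarith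
  · rw [passes_cut_true, dflt, if_pos rfl]
    positivity

/-- The example `e` passes the cuts at the values `g`, one for each feature. Following a path with
exactly these cuts to its end means lying in this box. -/
def InBox (g : Fin κ × Bool → Fin p) (e : Fin κ × Bool → ℝ) : Prop :=
  ∀ y, Passes (cut y (g y)) e

theorem classify_chainC_eq_red_iff_inBox (hL : ∀ x, x ∈ L ↔ ∃ y, x = cut y (g y)) :
    (chainC L (.leaf .red)).classify e = .red ↔ InBox g e := by
  simp only [classify_chainC_eq_red_iff, hL, true_and, forall_exists_index, forall_eq_apply_imp_iff,
    InBox]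

theorem inBox_dflt (g : Fin κ × Bool → Fin p) : InBox g (dflt κ p) :=
  fun y => passes_cut_dflt y (g y)

theorem not_inBox_update_false (g : Fin κ × Bool → Fin p) (i : Fin κ) :
    ¬ InBox g (Function.update e (i, false) 0) := by
  intro h
  have hlt := passes_cut_false.1 (h (i, false))
  rw [Function.update_self] at hlt
  linarith [Nat.cast_nonneg (α := ℝ) (g (i, false) : ℕ)]

theorem not_inBox_update_true (g : Fin κ × Bool → Fin p) (i : Fin κ) :
    ¬ InBox g (Function.update e (i, true) ((p : ℝ) + 1)) := by
  intro h
  have hle := passes_cut_true.1 (h (i, true))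
  rw [Function.update_self] at hle
  have hg : ((g (i, true) : ℕ) : ℝ) < p := by exact_mod_cast (g (i, true)).2
  linarith

/-- The value `a` may occur in both features of the class `i` within the box `g`. -/
def InSide (g : Fin κ × Bool → Fin p) (i : Fin κ) (a : ℝ) : Prop :=
  ((g (i, false) : ℕ) : ℝ) + 1 - 1 / 4 < a ∧ a ≤ ((g (i, true) : ℕ) : ℝ) + 1

theorem inSide_add_half_iff {i : Fin κ} {a : ℕ} :
    InSide g i ((a : ℝ) + 1 / 2) ↔ (g (i, false) : ℕ) < a ∧ a ≤ (g (i, true) : ℕ) := by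
  rw [InSide, ← Nat.add_one_le_iff,
    ← natCast_lt_add_iff (δ := 3 / 4) (by norm_num) (by norm_num),
    ← natCast_le_add_iff (δ := 1 / 2) (by norm_num) (by norm_num)]
  push_cast
  constructor <;> rintro ⟨_, _⟩ <;> constructor <;> linarith

theorem inSide_add_one_iff {i : Fin κ} {a : Fin p} :
    InSide g i ((a : ℕ) + 1) ↔ g (i, false) ≤ a ∧ a ≤ g (i, true) := by
  rw [InSide, Fin.le_def, Fin.le_def,
    ← natCast_lt_add_iff (δ := 1 / 4) (by norm_num) (by norm_num),
    add_le_add_iff_right, Nat.cast_le]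
  refine and_congr_left fun _ => ?_
  constructor <;> intro _ <;> linarith

theorem inBox_setBoth_iff {i : Fin κ} {a : ℝ} :
    InBox g (setBoth i a e) ↔ InSide g i a ∧ ∀ y, y.1 ≠ i → Passes (cut y (g y)) e := by
  have hne {y : Fin κ × Bool} (hy : y.1 ≠ i) :
      Passes (cut y (g y)) (setBoth i a e) ↔ Passes (cut y (g y)) e :=
    passes_congr (if_neg hy)
  have hside : InSide g i a ↔ ∀ b, Passes (cut (i, b) (g (i, b))) (setBoth i a e) := by
    simp [InSide, passes_cut_false, passes_cut_true, setBoth]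
  rw [hside]
  refine ⟨fun h => ⟨fun b => h (i, b), fun y hy => (hne hy).1 (h y)⟩, ?_⟩
  rintro ⟨hi, h⟩ ⟨j, b⟩
  obtain rfl | hj := eq_or_ne j i
  · exact hi b
  · exact (hne hj).2 (h _ hj)

theorem inBox_setBoth_dflt_iff {i : Fin κ} {a : ℝ} :
    InBox g (setBoth i a (dflt κ p)) ↔ InSide g i a := by
  rw [inBox_setBoth_iff, and_iff_left fun y _ => passes_cut_dflt y (g y)]

theorem inBox_edgeEx13_iff {u v : Fin κ × Fin p} (huv : u.1 ≠ v.1) :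
    InBox g (edgeEx13 u v) ↔ InSide g u.1 ((u.2 : ℕ) + 1) ∧ InSide g v.1 ((v.2 : ℕ) + 1) := by
  rw [edgeEx13, inBox_setBoth_iff, ← inBox_setBoth_dflt_iff (i := v.1)]
  refine and_congr_right fun _ => ⟨fun h y => ?_, fun h y _ => h y⟩
  by_cases hy : y.1 = u.1
  · have hyv : y.1 ≠ v.1 := hy ▸ huv
    exact (passes_congr (if_neg hyv)).2 (passes_cut_dflt y (g y))
  · exact h y hy

end Boxes

section Paths

variable {κ p : ℕ} {L : List ((Fin κ × Bool) × ℝ × Bool)}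

/-- The cuts that isolate the vertices chosen by `f`: the lower and the upper cut of each class at
the value of its chosen vertex. -/
noncomputable def choiceCuts (f : Fin κ → Fin p) : List ((Fin κ × Bool) × ℝ × Bool) :=
  (List.finRange κ).flatMap fun i => [cut (i, false) (f i), cut (i, true) (f i)]

theorem mem_choiceCuts {f : Fin κ → Fin p} {x : (Fin κ × Bool) × ℝ × Bool} :
    x ∈ choiceCuts f ↔ ∃ y : Fin κ × Bool, x = cut y (f y.1) := by
  simp [choiceCuts, Prod.exists]

theorem length_choiceCuts (f : Fin κ → Fin p) : (choiceCuts f).length = 2 * κ := by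
  simp [choiceCuts, List.length_flatMap, mul_comm]

theorem choiceCuts_sublist (f : Fin κ → Fin p) : (choiceCuts f).Sublist (allCuts κ p) := by
  refine List.Sublist.flatMap_right _ fun i _ => ?_
  exact List.Sublist.append (l₁ := [cut (i, false) (f i)]) (r₁ := [cut (i, true) (f i)])
    (List.singleton_sublist.2 (List.mem_map_of_mem (by simp)))
    (List.singleton_sublist.2 (List.mem_map_of_mem (by simp)))

theorem injOn_of_length_le_card {α β : Type*} [Fintype β] {φ : α → β} {l : List α}
    (hlen : l.length ≤ Fintype.card β) (hsurj : ∀ b, ∃ a ∈ l, φ a = b) :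
    Set.InjOn φ {a | a ∈ l} := by
  classical
  have hl : {a | a ∈ l} = (l.toFinset : Set α) := by simp
  rw [hl]
  refine Finset.injOn_of_surjOn_of_card_le (t := Finset.univ) φ (fun _ _ => Finset.mem_univ _)
    (fun b _ => ?_) ((List.toFinset_card_le l).trans hlen)
  simpa using hsurj b

theorem exists_mem_iff_eq_cut (hL : L ⊆ allCuts κ p) (hlen : L.length ≤ 2 * κ)
    (hsurj : ∀ y : Fin κ × Bool, ∃ x ∈ L, x.1 = y) :
    ∃ g : Fin κ × Bool → Fin p, ∀ x, x ∈ L ↔ ∃ y, x = cut y (g y) := by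
  have hcut (y : Fin κ × Bool) : ∃ c : Fin p, cut y c ∈ L := by
    obtain ⟨x, hx, rfl⟩ := hsurj y
    obtain ⟨y, c, rfl⟩ := mem_allCuts.1 (hL hx)
    exact ⟨c, hx⟩
  choose g hg using hcut
  have hinj : Set.InjOn Prod.fst {x | x ∈ L} :=
    injOn_of_length_le_card (hlen.trans_eq (by simp [mul_comm])) hsurj
  refine ⟨g, fun x => ⟨fun hx => ⟨x.1, hinj hx (hg x.1) rfl⟩, ?_⟩⟩
  rintro ⟨y, rfl⟩
  exact hg y

theorem exists_mem_fst_eq_of_classify_update (hL : L ⊆ allCuts κ p) {y : Fin κ × Bool} {a : ℝ}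
    (h : (chainC L (.leaf .red)).classify (Function.update (dflt κ p) y a) = .blue) :
    ∃ x ∈ L, x.1 = y := by
  by_contra! hne
  have hred : (chainC L (.leaf .red)).classify (Function.update (dflt κ p) y a) = .red := by
    refine classify_chainC_eq_red_iff.2 ⟨rfl, fun x hx => ?_⟩
    rw [passes_congr (Function.update_of_ne (hne x hx) a _)]
    obtain ⟨z, c, rfl⟩ := mem_allCuts.1 (hL hx)
    exact passes_cut_dflt z c
  exact absurd (hred.symm.trans h) (by decide)

end Paths

section TrainingSet

open Finset

variable {κ p : ℕ} {T : DTree (Fin κ × Bool)} {g : Fin κ × Bool → Fin p}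

theorem Label.eq_blue_iff_ne_red {c : Label} : c = .blue ↔ c ≠ .red := by
  cases c <;> simp

/-- The examples of the construction that do not depend on the edges of the graph, each taken
once; the training set contains `M` copies of each of them. -/
noncomputable def gadgetExamples (κ p : ℕ) : Multiset ((Fin κ × Bool → ℝ) × Label) :=
  ((univ ×ˢ Icc 1 (p - 1) : Finset (Fin κ × ℕ)).val.bind
      fun x => {(setBoth x.1 ((x.2 : ℝ) + 1 / 2) (dflt κ p), Label.blue)})
  + (univ.val.bind fun i : Fin κ =>
      {(Function.update (dflt κ p) (i, false) 0, Label.blue)}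
      + {(Function.update (dflt κ p) (i, true) ((p : ℝ) + 1), Label.blue)})
  + {(dflt κ p, Label.red)}

theorem forall_mem_gadgetExamples_iff {P : (Fin κ × Bool → ℝ) × Label → Prop} :
    (∀ q ∈ gadgetExamples κ p, P q) ↔
      (∀ (i : Fin κ) (a : ℕ), 1 ≤ a → a < p →
        P (setBoth i ((a : ℝ) + 1 / 2) (dflt κ p), .blue)) ∧
      (∀ i, P (Function.update (dflt κ p) (i, false) 0, .blue)) ∧
      (∀ i, P (Function.update (dflt κ p) (i, true) ((p : ℝ) + 1), .blue)) ∧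
      P (dflt κ p, .red) := by
  have hlt (a : ℕ) (ha : 1 ≤ a) : a ≤ p - 1 ↔ a < p := by omega
  have hbind {α : Type} {s : Multiset α} {F : α → Multiset ((Fin κ × Bool → ℝ) × Label)} :
      (∀ q ∈ s.bind F, P q) ↔ ∀ x ∈ s, ∀ q ∈ F x, P q := by
    simpa only [Multiset.mem_bind, forall_exists_index, and_imp] using
      ⟨fun h x hx q hq => h q x hx hq, fun h q x hx hq => h x hx q hq⟩
  simp +contextual only [gadgetExamples, Multiset.mem_add, or_imp, forall_and, hbind,
    Multiset.mem_singleton, forall_eq, mem_val, mem_product, mem_univ, mem_Icc, true_and,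
    and_imp, Prod.forall, forall_const, and_assoc, hlt]

theorem classify_gadgetExamples_iff_of_inBox (hT : ∀ e, T.classify e = .red ↔ InBox g e) :
    (∀ q ∈ gadgetExamples κ p, T.classify q.1 = q.2) ↔ ∀ i, g (i, true) ≤ g (i, false) := by
  have hblue (e) : T.classify e = .blue ↔ ¬ InBox g e := by rw [Label.eq_blue_iff_ne_red, Ne, hT]
  simp only [forall_mem_gadgetExamples_iff, hblue, hT, inBox_dflt, not_inBox_update_false,
    not_inBox_update_true, inBox_setBoth_dflt_iff, inSide_add_half_iff, not_false_eq_true,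
    implies_true, and_true]
  refine forall_congr' fun i => ⟨fun h => ?_, fun h a _ _ => ?_⟩
  · by_contra! hlt
    exact h (g (i, false) + 1) (by omega) (by omega) (by omega)
  · omega

variable (G : SimpleGraph (Fin κ × Fin p)) [DecidableRel G.Adj]

/-- The red edge examples of the construction. -/
noncomputable def edgeExamples : Multiset ((Fin κ × Bool → ℝ) × Label) :=
  (orientedEdges G Prod.fst).val.map fun q => (edgeEx13 q.1 q.2, Label.red)

theorem E13_eq : E13 G = edgeExamples G + #G.edgeFinset • gadgetExamples κ p := by
  have hbind {α : Type} (n : ℕ) (s : Multiset α)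
      (F : α → Multiset ((Fin κ × Bool → ℝ) × Label)) :
      n • s.bind F = s.bind fun x => n • F x := Multiset.sum_map_nsmul.symm
  simp only [gadgetExamples, nsmul_add, hbind, Multiset.nsmul_singleton, ← add_assoc]
  rfl

theorem errCountM_edgeExamples_add (hpart : ∀ u v : Fin κ × Fin p, G.Adj u v → u.1 ≠ v.1)
    (T : DTree (Fin κ × Bool)) :
    errCountM T (edgeExamples G)
      + #{q ∈ orientedEdges G Prod.fst | T.classify (edgeEx13 q.1 q.2) = .red}
      = #G.edgeFinset := by
  have hedges : errCountM T (edgeExamples G) =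
      #{q ∈ orientedEdges G Prod.fst | ¬ T.classify (edgeEx13 q.1 q.2) = .red} := by
    rw [errCountM, edgeExamples, Multiset.filter_map, Multiset.card_map]
    rfl
  rw [hedges, add_comm, card_filter_add_card_filter_not, card_orientedEdges G hpart]

variable {G} {L : List ((Fin κ × Bool) × ℝ × Bool)} {c : Label}

theorem errCountM_E13_add (hpart : ∀ u v : Fin κ × Fin p, G.Adj u v → u.1 ≠ v.1)
    (hT : ∀ q ∈ gadgetExamples κ p, T.classify q.1 = q.2) :
    errCountM T (E13 G)
      + #{q ∈ orientedEdges G Prod.fst | T.classify (edgeEx13 q.1 q.2) = .red}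
      = #G.edgeFinset := by
  rw [E13_eq, errCountM_add, errCountM_nsmul, errCountM_eq_zero_iff.2 hT, mul_zero, add_zero,
    errCountM_edgeExamples_add G hpart]

theorem card_edgeFinset_le_errCountM_E13_add
    (hpart : ∀ u v : Fin κ × Fin p, G.Adj u v → u.1 ≠ v.1)
    (hT : ∀ e, T.classify e = .red ↔ InBox g e) (hg : ∀ i, g (i, true) ≤ g (i, false)) :
    #G.edgeFinset ≤
      errCountM T (E13 G) + #(selectionGraph G fun i => g (i, false)).edgeFinset := by
  rw [← errCountM_E13_add hpart ((classify_gadgetExamples_iff_of_inBox hT).2 hg),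
    ← card_orientedEdges_filter_selected]
  refine Nat.add_le_add_left (card_le_card fun q hq => ?_) _
  obtain ⟨hq, hred⟩ := mem_filter.1 hq
  rw [hT, inBox_edgeEx13_iff (mem_orientedEdges.1 hq).2.ne, inSide_add_one_iff,
    inSide_add_one_iff] at hred
  exact mem_filter.2 ⟨hq, (hred.1.2.trans (hg _)).antisymm hred.1.1,
    (hred.2.2.trans (hg _)).antisymm hred.2.1⟩

theorem errCountM_choiceCuts_add (hpart : ∀ u v : Fin κ × Fin p, G.Adj u v → u.1 ≠ v.1)
    (f : Fin κ → Fin p) :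
    errCountM (chainC (choiceCuts f) (.leaf .red)) (E13 G) + #(selectionGraph G f).edgeFinset
      = #G.edgeFinset := by
  have hT (e : Fin κ × Bool → ℝ) :
      (chainC (choiceCuts f) (.leaf .red)).classify e = .red ↔ InBox (fun y => f y.1) e :=
    classify_chainC_eq_red_iff_inBox fun _ => mem_choiceCuts
  rw [← errCountM_E13_add hpart
      ((classify_gadgetExamples_iff_of_inBox hT).2 fun i => le_refl (f i)),
    ← card_orientedEdges_filter_selected]
  congr 2
  refine filter_congr fun q hq => ?_
  rw [hT, inBox_edgeEx13_iff (mem_orientedEdges.1 hq).2.ne, inSide_add_one_iff,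
    inSide_add_one_iff, ← le_antisymm_iff, ← le_antisymm_iff, eq_comm,
    @eq_comm _ (f q.2.1)]

theorem exists_inBox_of_classify_gadgetExamples (hL : L ⊆ allCuts κ p) (hlen : L.length ≤ 2 * κ)
    (h : ∀ q ∈ gadgetExamples κ p, (chainC L (.leaf c)).classify q.1 = q.2) :
    ∃ g : Fin κ × Bool → Fin p, ∀ e, (chainC L (.leaf c)).classify e = .red ↔ InBox g e := by
  obtain ⟨-, hlow, hhigh, hdflt⟩ := forall_mem_gadgetExamples_iff.1 h
  obtain ⟨rfl, -⟩ := classify_chainC_eq_red_iff.1 hdflt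
  have hsurj : ∀ y : Fin κ × Bool, ∃ x ∈ L, x.1 = y
    | (i, false) => exists_mem_fst_eq_of_classify_update hL (hlow i)
    | (i, true) => exists_mem_fst_eq_of_classify_update hL (hhigh i)
  obtain ⟨g, hg⟩ := exists_mem_iff_eq_cut hL hlen hsurj
  exact ⟨g, fun e => classify_chainC_eq_red_iff_inBox hg⟩

theorem classify_gadgetExamples_of_errCountM_E13_lt (h : errCountM T (E13 G) < #G.edgeFinset) :
    ∀ q ∈ gadgetExamples κ p, T.classify q.1 = q.2 := by
  rw [← errCountM_eq_zero_iff]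
  by_contra hne
  have hle : #G.edgeFinset ≤ #G.edgeFinset * errCountM T (gadgetExamples κ p) :=
    Nat.le_mul_of_pos_right _ (Nat.pos_of_ne_zero hne)
  rw [E13_eq, errCountM_add, errCountM_nsmul] at h
  omega

theorem exists_card_edgeFinset_le_errCountM_E13_add
    (hpart : ∀ u v : Fin κ × Fin p, G.Adj u v → u.1 ≠ v.1)
    (hL : L ⊆ allCuts κ p) (hlen : L.length ≤ 2 * κ)
    (hlt : errCountM (chainC L (.leaf c)) (E13 G) < #G.edgeFinset) :
    ∃ f : Fin κ → Fin p, #G.edgeFinset ≤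
      errCountM (chainC L (.leaf c)) (E13 G) + #(selectionGraph G f).edgeFinset := by
  have hgadget := classify_gadgetExamples_of_errCountM_E13_lt hlt
  obtain ⟨g, hg⟩ := exists_inBox_of_classify_gadgetExamples hL hlen hgadget
  exact ⟨_, card_edgeFinset_le_errCountM_E13_add hpart hg
    ((classify_gadgetExamples_iff_of_inBox hg).1 hgadget)⟩

end TrainingSet

theorem intCast_mul_sub_one_div_two (n : ℕ) : (n : ℤ) * ((n : ℤ) - 1) / 2 = n.choose 2 := by
  obtain _ | n := n
  · rfl
  · rw [Nat.choose_two_right, Nat.add_sub_cancel]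
    push_cast
    rw [add_sub_cancel_right]

/-- Let `2 ≤ κ`, `1 ≤ p`, and let `G` be a graph on the vertex
classes `V_i = {i} × Fin p` with no edge inside a class, and `M = |E(G)|`. Then `G`
has a multicolored clique (one vertex per class, pairwise adjacent) iff some
decision tree obtained from `T13` by subtree raising operations has exactly `2κ`
inner nodes and at most `M − κ(κ−1)/2` errors on the constructed training set. -/
theorem stmt13 (κ p : ℕ) (hκ : 2 ≤ κ) (hp : 1 ≤ p)
    (G : SimpleGraph (Fin κ × Fin p)) [DecidableRel G.Adj]
    (hpart : ∀ u v : Fin κ × Fin p, G.Adj u v → u.1 ≠ v.1) :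
    (∃ f : Fin κ → Fin p, ∀ i j : Fin κ, i ≠ j → G.Adj (i, f i) (j, f j))
    ↔ ∃ T' : DTree (Fin κ × Bool), RaisedFrom (T13 κ p) T'
        ∧ T'.innerCount = 2 * κ
        ∧ (errCountM T' (E13 G) : ℤ)
            ≤ (G.edgeFinset.card : ℤ) - (κ : ℤ) * ((κ : ℤ) - 1) / 2 := by
  rw [T13_eq_chainC, intCast_mul_sub_one_div_two]
  constructor
  · rintro ⟨f, hf⟩
    have hedges := forall_adj_iff_choose_two_le_card_edgeFinset.1 hf
    have herr := errCountM_choiceCuts_add hpart f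
    rw [Fintype.card_fin] at hedges
    refine ⟨_, raisedFrom_chainC_of_sublist (choiceCuts_sublist f) _, ?_, by omega⟩
    rw [innerCount_chainC, length_choiceCuts]
  · rintro ⟨T', hT', hcount, herr⟩
    obtain ⟨L, c, hL, rfl⟩ := hT'.exists_eq_chainC
    rw [innerCount_chainC] at hcount
    have hpos : 0 < κ.choose 2 := Nat.choose_pos hκ
    have hlt : errCountM (chainC L (.leaf c)) (E13 G) < G.edgeFinset.card := by omega
    obtain ⟨f, hf⟩ :=
      exists_card_edgeFinset_le_errCountM_E13_add hpart hL.subset hcount.le hlt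
    refine ⟨f, forall_adj_iff_choose_two_le_card_edgeFinset.2 ?_⟩
    rw [Fintype.card_fin]
    omega
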